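/- Under the stated hypotheses, if σ and Σ are subordinated with sup σ < inf Σ, then ‖E_A(σ) − E_B((−∞, sup σ])‖ ≤ sin((1/2)·arctan(2‖V‖/d)) < √2/2. -/

import Mathlib

/-- `E` is the projection-valued spectral measure of the bounded self-adjoint operator `T`
on the complex Hilbert space `H`: each `E Δ` (for Borel `Δ ⊆ ℝ`) is an orthogonal
projection, `E` is multiplicative and countably additive (in the strong sense), `E ℝ = 1`,
each `E Δ` commutes with `T`, and on the range of `E Δ` the operator `T` has its
approximate point spectrum inside the closure of `Δ` (which uniquely characterizes the
spectral measure of `T`). -/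
structure IsSpectralMeasure {H : Type*} [NormedAddCommGroup H] [InnerProductSpace ℂ H]
    [CompleteSpace H] (T : H →L[ℂ] H) (E : Set ℝ → H →L[ℂ] H) : Prop where
  isSelfAdjoint : ∀ Δ : Set ℝ, MeasurableSet Δ → IsSelfAdjoint (E Δ)
  map_inter : ∀ Δ₁ Δ₂ : Set ℝ, MeasurableSet Δ₁ → MeasurableSet Δ₂ →
    E Δ₁ * E Δ₂ = E (Δ₁ ∩ Δ₂)
  map_univ : E Set.univ = 1
  countably_additive : ∀ Δ : ℕ → Set ℝ, (∀ n, MeasurableSet (Δ n)) →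
    Pairwise (Function.onFun Disjoint Δ) →
    ∀ x : H, HasSum (fun n => E (Δ n) x) (E (⋃ n, Δ n) x)
  commutes : ∀ Δ : Set ℝ, MeasurableSet Δ → Commute T (E Δ)
  spectrum_loc : ∀ Δ : Set ℝ, MeasurableSet Δ → ∀ x : H, E Δ x = x →
    ∀ μ : ℝ, Metric.infDist μ Δ * ‖x‖ ≤ ‖T x - (μ : ℂ) • x‖

/-!
Put `J = 2 * E_A(σ) - 1`, `K = 2 * E_B((-∞, sup σ]) - 1` and `T = m - B`, where `m` is the midpoint
of the gap `(sup σ, inf Σ)`. Since `V` is off-diagonal, `J * V` is skew-adjoint, so the numerical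
range of `J * T = J * (m - A) - J * V` lies in the set `re ≥ d / 2`, `|im| ≤ ‖V‖`. The same
computation with any other point of the gap in place of `m` shows that the gap is free of spectrum
of `B`, hence `W = K * T ≥ 0`. Now `U = J * K` is unitary with `U * W = J * T`, and multiplying
by `W ≥ 0` relates the numerical range of `J * T` to the spectrum of `U`: the latter lies in the
sector `|arg z| ≤ θ := arctan (2 * ‖V‖ / d)`. Therefore
`2 * ‖E_A(σ) - E_B((-∞, sup σ])‖ = ‖U - 1‖ ≤ 2 * sin (θ / 2)`.
-/

open scoped ComplexOrder InnerProductSpace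

lemma two_mul_sub_one_mul_self {R : Type*} [Ring R] {p : R} (hp : IsIdempotentElem p) :
    (2 * p - 1) * (2 * p - 1) = 1 := by
  simp only [mul_sub, sub_mul, two_mul, mul_add, add_mul, hp.eq]
  simp

lemma two_mul_sub_one_mul_eq_neg {R : Type*} [Ring R] {p v : R} (h₁ : p * v * p = 0)
    (h₂ : (1 - p) * v * (1 - p) = 0) : (2 * p - 1) * v = -(v * (2 * p - 1)) := by
  have hv : v = p * v + v * p := by
    rw [← sub_eq_zero, ← h₂, ← sub_eq_zero]
    noncomm_ring
    simp [← mul_assoc, h₁]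
  have : (2 * p - 1) * v + v * (2 * p - 1) = 2 * (p * v + v * p) - 2 * v := by noncomm_ring
  rw [eq_neg_iff_add_eq_zero, this, ← hv, sub_self]

lemma two_mul_sub_one_mul_mem_skewAdjoint {R : Type*} [Ring R] [StarRing R] {p v : R}
    (hp : IsSelfAdjoint p) (hv : IsSelfAdjoint v) (h₁ : p * v * p = 0)
    (h₂ : (1 - p) * v * (1 - p) = 0) : (2 * p - 1) * v ∈ skewAdjoint R := by
  have hstar : star ((2 * p - 1) * v) = v * (2 * p - 1) := by
    simp [hp.star_eq, hv.star_eq, two_mul]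
  rw [skewAdjoint.mem_iff, hstar, two_mul_sub_one_mul_eq_neg h₁ h₂, neg_neg]

lemma cos_arctan_le_re {z : ℂ} (hz : ‖z‖ = 1) (hre : 0 ≤ z.re) {t : ℝ}
    (him : |z.im| ≤ t * z.re) : Real.cos (Real.arctan t) ≤ z.re := by
  rw [Real.cos_arctan, div_le_iff₀ (by positivity)]
  refine one_le_sq_iff₀ (by positivity) |>.mp ?_
  calc 1 = z.re ^ 2 + |z.im| ^ 2 := by
        rw [sq_abs, ← Complex.sq_norm_sub_sq_re, hz]; ring
    _ ≤ z.re ^ 2 + (t * z.re) ^ 2 := by gcongr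
    _ = (z.re * √(1 + t ^ 2)) ^ 2 := by rw [mul_pow _ √_, Real.sq_sqrt (by positivity)]; ring

section CStarAlgebra

variable {A : Type*} [CStarAlgebra A]

lemma norm_sub_one_le_of_forall_cos_le_re {u : A} (hu : u ∈ unitary A) {θ : ℝ}
    (hθ : 0 ≤ Real.sin (θ / 2)) (h : ∀ z ∈ spectrum ℂ u, Real.cos θ ≤ z.re) :
    ‖u - 1‖ ≤ 2 * Real.sin (θ / 2) := by
  obtain _ | _ := subsingleton_or_nontrivial A
  · simpa [Subsingleton.elim (u - 1) 0] using hθ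
  obtain ⟨x, hx⟩ := ((spectrum.isCompact (𝕜 := ℂ) u).image Complex.continuous_re).exists_isLeast
    ((spectrum.nonempty u).image _)
  obtain ⟨z, hz, rfl⟩ := hx.1
  have hcos : Real.cos θ = 1 - 2 * Real.sin (θ / 2) ^ 2 := by
    rw [← Real.cos_two_mul_eq_one_sub, mul_div_cancel₀ _ two_ne_zero]
  refine le_of_sq_le_sq ?_ (by positivity)
  calc ‖u - 1‖ ^ 2 = 2 * (1 - z.re) := Unitary.norm_sub_one_sq_eq hu hx
    _ ≤ (2 * Real.sin (θ / 2)) ^ 2 := by linarith [h z hz]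

lemma norm_two_mul_sub_one_mul_sub_one {p : A} (hp : IsStarProjection p) (r : A) :
    ‖(2 * p - 1) * (2 * r - 1) - 1‖ = 2 * ‖p - r‖ := by
  calc ‖(2 * p - 1) * (2 * r - 1) - 1‖ = ‖(2 * p - 1) * ((2 * r - 1) - (2 * p - 1))‖ := by
        rw [mul_sub _ (2 * r - 1), two_mul_sub_one_mul_self hp.isIdempotentElem]
    _ = ‖(2 * r - 1) - (2 * p - 1)‖ :=
        CStarRing.norm_mem_unitary_mul _ hp.two_mul_sub_one_mem_unitary
    _ = ‖(2 : ℝ) • (p - r)‖ := by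
        rw [sub_sub_sub_cancel_right, ← mul_sub, two_mul, ← two_smul ℝ, norm_smul, norm_smul,
          norm_sub_rev]
    _ = 2 * ‖p - r‖ := by rw [norm_smul, Real.norm_ofNat]

end CStarAlgebra

section Hilbert

variable {H : Type*} [NormedAddCommGroup H] [InnerProductSpace ℂ H] [CompleteSpace H]

lemma isUnit_of_forall_le_re_inner {X : H →L[ℂ] H} {γ : ℝ} (hγ : 0 < γ)
    (h : ∀ x, γ * ‖x‖ ^ 2 ≤ (⟪x, X x⟫_ℂ).re) : IsUnit X := by
  refine X.isUnit_of_forall_le_norm_inner_map (c := ⟨γ, hγ.le⟩) hγ fun x ↦ ?_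
  calc ‖x‖ ^ 2 * γ ≤ (⟪x, X x⟫_ℂ).re := by linarith [h x]
    _ ≤ ‖⟪x, X x⟫_ℂ‖ := Complex.re_le_norm _
    _ = ‖⟪X x, x⟫_ℂ‖ := norm_inner_symm _ _

-- If `re (c * z) ≤ 0`, then `-c • (z - N) * W` is still strongly accretive, hence invertible.
lemma re_mul_pos_of_mem_spectrum {N W : H →L[ℂ] H} (hW : 0 ≤ W) (hW_unit : IsUnit W)
    {c : ℂ} {γ : ℝ} (hγ : 0 < γ) (h : ∀ x, γ * ‖x‖ ^ 2 ≤ (c * ⟪x, (N * W) x⟫_ℂ).re)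
    {z : ℂ} (hz : z ∈ spectrum ℂ N) : 0 < (c * z).re := by
  by_contra! hcz
  refine spectrum.mem_iff.mp hz ?_
  have hunit : IsUnit (algebraMap ℂ _ (-c) * (algebraMap ℂ _ z - N) * W) := by
    refine isUnit_of_forall_le_re_inner hγ fun x ↦ ?_
    obtain ⟨hre, him⟩ := Complex.nonneg_iff.mp
      ((W.nonneg_iff_isPositive.mp hW).inner_nonneg_right x)
    calc γ * ‖x‖ ^ 2 ≤ (c * ⟪x, (N * W) x⟫_ℂ).re := h x
      _ ≤ (c * ⟪x, (N * W) x⟫_ℂ).re - (c * z).re * (⟪x, W x⟫_ℂ).re := by nlinarith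
      _ = (⟪x, (algebraMap ℂ _ (-c) * (algebraMap ℂ _ z - N) * W) x⟫_ℂ).re := by
        simp [inner_sub_right, inner_smul_right, Algebra.algebraMap_eq_smul_one, sub_mul, ← him]
        ring
  exact ((Commute.isUnit_mul_iff <| Algebra.commutes (-c) (algebraMap ℂ _ z - N)).mp
    (hW_unit.mul_right_iff.mp hunit)).2

lemma re_pos_and_abs_im_le_of_mem_spectrum {N W : H →L[ℂ] H} (hW : 0 ≤ W) (hW_unit : IsUnit W)
    {δ v : ℝ} (hδ : 0 < δ) (hv : 0 ≤ v) (hre : ∀ x, δ * ‖x‖ ^ 2 ≤ (⟪x, (N * W) x⟫_ℂ).re)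
    (him : ∀ x, |(⟪x, (N * W) x⟫_ℂ).im| ≤ v * ‖x‖ ^ 2) {z : ℂ} (hz : z ∈ spectrum ℂ N) :
    0 < z.re ∧ δ * |z.im| ≤ v * z.re := by
  have hz_re : 0 < z.re := by
    simpa using re_mul_pos_of_mem_spectrum (c := 1) hW hW_unit hδ (by simpa using hre) hz
  refine ⟨hz_re, ?_⟩
  by_contra! hlt
  have hz_im : 0 < |z.im| := pos_of_mul_pos_right ((mul_nonneg hv hz_re.le).trans_lt hlt) hδ.le
  let c : ℂ := z.im * Complex.I * (starRingEnd ℂ) z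
  have hcz : (c * z).re = 0 := by
    simp [c]; ring
  refine (re_mul_pos_of_mem_spectrum hW hW_unit (c := c)
    (mul_pos hz_im (sub_pos.mpr hlt)) (fun x ↦ ?_) hz).ne' hcz
  set g := ⟪x, (N * W) x⟫_ℂ
  have hgx : z.im * g.im ≤ |z.im| * (v * ‖x‖ ^ 2) :=
    calc z.im * g.im ≤ |z.im| * |g.im| := (le_abs_self _).trans (abs_mul _ _).le
      _ ≤ |z.im| * (v * ‖x‖ ^ 2) := by gcongr; exact him x
  calc |z.im| * (δ * |z.im| - v * z.re) * ‖x‖ ^ 2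
      = |z.im| ^ 2 * (δ * ‖x‖ ^ 2) - z.re * (|z.im| * (v * ‖x‖ ^ 2)) := by ring
    _ ≤ |z.im| ^ 2 * g.re - z.re * (z.im * g.im) := by gcongr; exact hre x
    _ = (c * g).re := by rw [sq_abs]; simp [c]; ring

lemma norm_sub_le_sin_arctan_div_two {P R T : H →L[ℂ] H} (hP : IsStarProjection P)
    (hR : IsStarProjection R) (hRT : 0 ≤ (2 * R - 1) * T) {δ v : ℝ} (hδ : 0 < δ) (hv : 0 ≤ v)
    (hre : ∀ x, δ * ‖x‖ ^ 2 ≤ (⟪x, ((2 * P - 1) * T) x⟫_ℂ).re)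
    (him : ∀ x, |(⟪x, ((2 * P - 1) * T) x⟫_ℂ).im| ≤ v * ‖x‖ ^ 2) :
    ‖P - R‖ ≤ Real.sin (Real.arctan (v / δ) / 2) := by
  set U := (2 * P - 1) * (2 * R - 1) with hU_def
  set W := (2 * R - 1) * T with hW_def
  have hJ := hP.two_mul_sub_one_mem_unitary
  have hK := hR.two_mul_sub_one_mem_unitary
  have hU : U ∈ unitary (H →L[ℂ] H) := mul_mem hJ hK
  have hUW : U * W = (2 * P - 1) * T := by
    rw [hU_def, hW_def, mul_assoc, ← mul_assoc (2 * R - 1),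
      two_mul_sub_one_mul_self hR.isIdempotentElem, one_mul]
  rw [← hUW] at hre him
  have hW_unit : IsUnit W :=
    (Unitary.isUnit_coe (U := ⟨U, hU⟩)).mul_left_iff.mp (isUnit_of_forall_le_re_inner hδ hre)
  have hcos (z) (hz : z ∈ spectrum ℂ U) : Real.cos (Real.arctan (v / δ)) ≤ z.re := by
    obtain ⟨hz_re, hz_im⟩ := re_pos_and_abs_im_le_of_mem_spectrum hRT hW_unit hδ hv hre him hz
    refine cos_arctan_le_re (spectrum.norm_eq_one_of_unitary hU hz) hz_re.le ?_
    rwa [div_mul_eq_mul_div, le_div_iff₀' hδ]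
  have hsin : 0 ≤ Real.sin (Real.arctan (v / δ) / 2) := by
    have := Real.arctan_nonneg.mpr (div_nonneg hv hδ.le)
    exact Real.sin_nonneg_of_nonneg_of_le_pi (by positivity)
      (by linarith [Real.arctan_lt_pi_div_two (v / δ), Real.pi_pos])
  refine le_of_mul_le_mul_left ?_ (two_pos (α := ℝ))
  rw [← norm_two_mul_sub_one_mul_sub_one hP]
  exact norm_sub_one_le_of_forall_cos_le_re hU hsin hcos

lemma re_inner_self_eq_zero_of_mem_skewAdjoint {S : H →L[ℂ] H}
    (hS : S ∈ skewAdjoint (H →L[ℂ] H)) (x : H) : (⟪x, S x⟫_ℂ).re = 0 := by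
  have hre : (⟪x, S x⟫_ℂ).re = -(⟪S x, x⟫_ℂ).re := by
    rw [← ContinuousLinearMap.adjoint_inner_left, ← ContinuousLinearMap.star_eq_adjoint,
      skewAdjoint.mem_iff.mp hS, neg_apply, inner_neg_left, Complex.neg_re]
  have hsymm : (⟪S x, x⟫_ℂ).re = (⟪x, S x⟫_ℂ).re := inner_re_symm (𝕜 := ℂ) _ _
  linarith

lemma mul_norm_sq_le_re_inner_add {Y S : H →L[ℂ] H} {δ : ℝ} (hY : algebraMap ℝ _ δ ≤ Y)
    (hS : S ∈ skewAdjoint (H →L[ℂ] H)) (x : H) : δ * ‖x‖ ^ 2 ≤ (⟪x, (Y + S) x⟫_ℂ).re := by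
  have hYx := (ContinuousLinearMap.le_def _ _ |>.mp hY).re_inner_nonneg_right x
  simpa [inner_sub_right, inner_add_right, inner_smul_right_eq_smul, Algebra.algebraMap_eq_smul_one,
    re_inner_self_eq_zero_of_mem_skewAdjoint hS, ← Complex.ofReal_pow] using hYx

lemma abs_im_inner_add_le {Y S : H →L[ℂ] H} (hY : IsSelfAdjoint Y) (x : H) :
    |(⟪x, (Y + S) x⟫_ℂ).im| ≤ ‖S‖ * ‖x‖ ^ 2 := by
  have hYx : (⟪x, Y x⟫_ℂ).im = 0 :=
    (ContinuousLinearMap.isSelfAdjoint_iff_isSymmetric.mp hY).im_inner_self_apply x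
  calc |(⟪x, (Y + S) x⟫_ℂ).im| = |(⟪x, S x⟫_ℂ).im| := by simp [hYx]
    _ ≤ ‖⟪x, S x⟫_ℂ‖ := Complex.abs_im_le_norm _
    _ ≤ ‖x‖ * (‖S‖ * ‖x‖) := (norm_inner_le_norm _ _).trans (by gcongr; exact S.le_opNorm x)
    _ = ‖S‖ * ‖x‖ ^ 2 := by ring

end Hilbert

lemma eq_zero_of_isIdempotentElem_of_norm_lt_one {R : Type*} [NonUnitalNormedRing R] {p : R}
    (hp : IsIdempotentElem p) (h : ‖p‖ < 1) : p = 0 := by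
  have hle : ‖p‖ ≤ ‖p‖ * ‖p‖ := by simpa [hp.eq] using norm_mul_le p p
  exact norm_eq_zero.mp (by nlinarith [norm_nonneg p])

section SpectralMeasure

variable {H : Type*} [NormedAddCommGroup H] [InnerProductSpace ℂ H]

-- Expanding the square bounds `‖z‖ ^ 2 + 2 * s * re ⟪x, z⟫` below by `0`; let `s → ∞`.
lemma re_inner_nonneg_of_forall_mul_norm_le {x z : H}
    (h : ∀ s : ℝ, 0 < s → s * ‖x‖ ≤ ‖z + s • x‖) : 0 ≤ (⟪x, z⟫_ℂ).re := by
  have hquad (s : ℝ) (hs : 0 < s) : 0 ≤ ‖z‖ ^ 2 + 2 * s * (⟪x, z⟫_ℂ).re := by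
    have hexpand : ‖z + s • x‖ ^ 2 = ‖z‖ ^ 2 + 2 * (s * (⟪x, z⟫_ℂ).re) + (s * ‖x‖) ^ 2 := by
      rw [norm_add_sq (𝕜 := ℂ), inner_re_symm, inner_smul_left_eq_smul, norm_smul,
        Real.norm_of_nonneg hs.le]
      simp
    nlinarith [pow_le_pow_left₀ (by positivity) (h s hs) 2]
  by_contra! hneg
  have hs : 0 < (‖z‖ ^ 2 + 1) / (-2 * (⟪x, z⟫_ℂ).re) := div_pos (by positivity) (by linarith)
  have hre : (⟪x, z⟫_ℂ).re ≠ 0 := hneg.ne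
  have := hquad _ hs
  have hval : 2 * ((‖z‖ ^ 2 + 1) / (-2 * (⟪x, z⟫_ℂ).re)) * (⟪x, z⟫_ℂ).re = -(‖z‖ ^ 2 + 1) := by
    field_simp
  linarith

variable [CompleteSpace H]

lemma re_inner_apply_self_eq_norm_sq {P : H →L[ℂ] H} (hP : IsStarProjection P) (x : H) :
    (⟪x, P x⟫_ℂ).re = ‖P x‖ ^ 2 := by
  have hPP : P.adjoint ∘L P = P := by
    rw [← ContinuousLinearMap.star_eq_adjoint, hP.isSelfAdjoint.star_eq]
    exact hP.isIdempotentElem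
  simpa [hPP] using (P.apply_norm_sq_eq_inner_adjoint_right x).symm

lemma mul_nonneg_of_forall_apply_eq_self {P X : H →L[ℂ] H} (hP : IsStarProjection P)
    (hX : IsSelfAdjoint X) (hXP : Commute X P) (h : ∀ x, P x = x → 0 ≤ (⟪x, X x⟫_ℂ).re) :
    0 ≤ X * P := by
  rw [ContinuousLinearMap.nonneg_iff_isPositive, ContinuousLinearMap.isPositive_def']
  refine ⟨(hX.commute_iff hP.isSelfAdjoint).mp hXP, fun x ↦ ?_⟩
  have hPP (y : H) : P (P y) = P y := DFunLike.congr_fun hP.isIdempotentElem.eq y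
  have hPX : P (X (P x)) = X (P x) :=
    calc P (X (P x)) = X (P (P x)) := DFunLike.congr_fun hXP.eq.symm (P x)
      _ = X (P x) := by rw [hPP]
  calc 0 ≤ (⟪P x, X (P x)⟫_ℂ).re := h (P x) (hPP x)
    _ = (⟪x, P (X (P x))⟫_ℂ).re := congrArg Complex.re
        (ContinuousLinearMap.isSelfAdjoint_iff_isSymmetric.mp hP.isSelfAdjoint x (X (P x)))
    _ = (⟪(X * P) x, x⟫_ℂ).re := by rw [hPX]; exact inner_re_symm (𝕜 := ℂ) x _

namespace IsSpectralMeasure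

variable {T : H →L[ℂ] H} {E : Set ℝ → H →L[ℂ] H} {Δ : Set ℝ} {x : H}

lemma isStarProjection (hE : IsSpectralMeasure T E) (hΔ : MeasurableSet Δ) :
    IsStarProjection (E Δ) where
  isIdempotentElem := by rw [IsIdempotentElem, hE.map_inter Δ Δ hΔ hΔ, Set.inter_self]
  isSelfAdjoint := hE.isSelfAdjoint Δ hΔ

lemma map_empty (hE : IsSpectralMeasure T E) : E ∅ = 0 := by
  ext x
  have := (hE.countably_additive (fun _ ↦ ∅) (fun _ ↦ .empty) (by simp [Pairwise]) x).summable
  simpa [summable_const_iff] using this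

/-- The scalar spectral measure `Δ ↦ ⟪x, E Δ x⟫ = ‖E Δ x‖ ^ 2` of the vector `x`, through which
facts about null sets transfer to `E`. -/
noncomputable def scalarMeasure (hE : IsSpectralMeasure T E) (x : H) : MeasureTheory.Measure ℝ :=
  .ofMeasurable (fun Δ _ ↦ ENNReal.ofReal (⟪x, E Δ x⟫_ℂ).re) (by simp [hE.map_empty])
    fun Δ hΔ hdisj ↦ by
      have hsum : HasSum (fun n ↦ (⟪x, E (Δ n) x⟫_ℂ).re) (⟪x, E (⋃ n, Δ n) x⟫_ℂ).re :=
        Complex.reCLM.hasSum ((innerSL ℂ x).hasSum (hE.countably_additive Δ hΔ hdisj x))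
      have hnonneg (n : ℕ) : 0 ≤ (⟪x, E (Δ n) x⟫_ℂ).re := by
        rw [re_inner_apply_self_eq_norm_sq (hE.isStarProjection (hΔ n))]
        positivity
      rw [← ENNReal.ofReal_tsum_of_nonneg hnonneg hsum.summable, hsum.tsum_eq]

lemma scalarMeasure_apply_eq_zero_iff (hE : IsSpectralMeasure T E) (hΔ : MeasurableSet Δ) :
    hE.scalarMeasure x Δ = 0 ↔ E Δ x = 0 := by
  rw [scalarMeasure, MeasureTheory.Measure.ofMeasurable_apply Δ hΔ,
    re_inner_apply_self_eq_norm_sq (hE.isStarProjection hΔ)]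
  simp

lemma map_compl (hE : IsSpectralMeasure T E) (hΔ : MeasurableSet Δ) : E Δᶜ = 1 - E Δ := by
  ext x
  set y := x - E Δ x - E Δᶜ x with hy
  have hmul {Δ₁ Δ₂ : Set ℝ} (h₁ : MeasurableSet Δ₁) (h₂ : MeasurableSet Δ₂) :
      E Δ₁ (E Δ₂ x) = E (Δ₁ ∩ Δ₂) x :=
    DFunLike.congr_fun (hE.map_inter Δ₁ Δ₂ h₁ h₂) x
  have hyΔ : E Δ y = 0 := by simp [hy, hmul, hΔ, hE.map_empty]
  have hyΔc : E Δᶜ y = 0 := by simp [hy, hmul, hΔ, hE.map_empty]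
  have hyuniv : hE.scalarMeasure y Set.univ = 0 := by
    rw [← Set.union_compl_self Δ, MeasureTheory.measure_union_null_iff,
      hE.scalarMeasure_apply_eq_zero_iff hΔ, hE.scalarMeasure_apply_eq_zero_iff hΔ.compl]
    exact ⟨hyΔ, hyΔc⟩
  have hy0 : y = 0 := by
    simpa [hE.map_univ] using (hE.scalarMeasure_apply_eq_zero_iff .univ).mp hyuniv
  simpa using (sub_eq_zero.mp (hy.symm.trans hy0)).symm

lemma mul_norm_le_norm_sub (hE : IsSpectralMeasure T E) (hΔ : MeasurableSet Δ)
    (hx : E Δ x = x) {μ s : ℝ} (hs : ∀ t ∈ Δ, s ≤ dist μ t) :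
    s * ‖x‖ ≤ ‖T x - μ • x‖ := by
  obtain rfl | hne := Δ.eq_empty_or_nonempty
  · have hx0 : x = 0 := by rw [← hx, hE.map_empty, zero_apply]
    simp [hx0]
  · calc s * ‖x‖ ≤ Metric.infDist μ Δ * ‖x‖ := by gcongr; exact (Metric.le_infDist hne).mpr hs
      _ ≤ ‖T x - (μ : ℂ) • x‖ := hE.spectrum_loc Δ hΔ x hx μ
      _ = ‖T x - μ • x‖ := by rw [Complex.coe_smul]

lemma commute_algebraMap_sub (hE : IsSpectralMeasure T E) (hΔ : MeasurableSet Δ) (r : ℝ) :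
    Commute (algebraMap ℝ _ r - T) (E Δ) :=
  .sub_left (Algebra.commutes r _) (hE.commutes Δ hΔ)

lemma commute_algebraMap_sub_two_mul_sub_one (hE : IsSpectralMeasure T E) (hΔ : MeasurableSet Δ)
    (r : ℝ) : Commute (algebraMap ℝ _ r - T) (2 * E Δ - 1) :=
  ((Commute.ofNat_right _ 2).mul_right (hE.commute_algebraMap_sub hΔ r)).sub_right (.one_right _)

lemma algebraMap_sub_mul_nonneg (hE : IsSpectralMeasure T E) (hT : IsSelfAdjoint T)
    (hΔ : MeasurableSet Δ) {b : ℝ} (hb : Δ ⊆ Set.Iic b) : 0 ≤ (algebraMap ℝ _ b - T) * E Δ := by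
  refine mul_nonneg_of_forall_apply_eq_self (hE.isStarProjection hΔ)
    (.sub (.algebraMap _ (.all b)) hT) (hE.commute_algebraMap_sub hΔ b)
    fun x hx ↦ re_inner_nonneg_of_forall_mul_norm_le fun s _ ↦ ?_
  calc s * ‖x‖ ≤ ‖T x - (b + s) • x‖ :=
        hE.mul_norm_le_norm_sub hΔ hx fun t ht ↦
          le_trans (by linarith [Set.mem_Iic.mp (hb ht)]) (le_abs_self _)
    _ = ‖(algebraMap ℝ (H →L[ℂ] H) b - T) x + s • x‖ := by
        rw [norm_sub_rev, add_smul, add_sub_right_comm]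
        simp [Algebra.algebraMap_eq_smul_one]

lemma sub_algebraMap_mul_nonneg (hE : IsSpectralMeasure T E) (hT : IsSelfAdjoint T)
    (hΔ : MeasurableSet Δ) {b : ℝ} (hb : Δ ⊆ Set.Ici b) : 0 ≤ (T - algebraMap ℝ _ b) * E Δ := by
  refine mul_nonneg_of_forall_apply_eq_self (hE.isStarProjection hΔ)
    (.sub hT (.algebraMap _ (.all b)))
      ((hE.commutes Δ hΔ).sub_left (Algebra.commutes b _))
    fun x hx ↦ re_inner_nonneg_of_forall_mul_norm_le fun s _ ↦ ?_
  calc s * ‖x‖ ≤ ‖T x - (b - s) • x‖ :=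
        hE.mul_norm_le_norm_sub hΔ hx fun t ht ↦
          le_trans (by linarith [Set.mem_Ici.mp (hb ht)]) (neg_le_abs _)
    _ = ‖(T - algebraMap ℝ (H →L[ℂ] H) b) x + s • x‖ := by
        rw [sub_smul, ← sub_add]
        simp [Algebra.algebraMap_eq_smul_one]

lemma norm_sub_algebraMap_mul_le (hE : IsSpectralMeasure T E) (hT : IsSelfAdjoint T)
    (hΔ : MeasurableSet Δ) {a b : ℝ} (hab : a ≤ b) (hsub : Δ ⊆ Set.Icc a b) :
    ‖(T - algebraMap ℝ _ a) * E Δ‖ ≤ b - a := by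
  have hba : 0 ≤ b - a := sub_nonneg.mpr hab
  have hlow : 0 ≤ (T - algebraMap ℝ _ a) * E Δ :=
    hE.sub_algebraMap_mul_nonneg hT hΔ fun s hs ↦ (hsub hs).1
  have hhigh : 0 ≤ (algebraMap ℝ _ b - T) * E Δ :=
    hE.algebraMap_sub_mul_nonneg hT hΔ fun s hs ↦ (hsub hs).2
  rw [CStarAlgebra.norm_le_iff_le_algebraMap _ hba hlow]
  calc (T - algebraMap ℝ _ a) * E Δ
      ≤ (T - algebraMap ℝ _ a) * E Δ + (algebraMap ℝ _ b - T) * E Δ :=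
        le_add_of_nonneg_right hhigh
    _ = (b - a) • E Δ := by
        rw [← add_mul, sub_add_sub_cancel', ← map_sub, Algebra.smul_def]
    _ ≤ (b - a) • 1 := smul_le_smul_of_nonneg_left (hE.isStarProjection hΔ).le_one hba
    _ = algebraMap ℝ _ (b - a) := (Algebra.algebraMap_eq_smul_one _).symm

lemma exists_map_Icc_eq_zero (hE : IsSpectralMeasure T E) (hT : IsSelfAdjoint T) {t : ℝ}
    (ht : t ∉ spectrum ℝ T) : ∃ ε > 0, E (Set.Icc (t - ε) (t + ε)) = 0 := by
  obtain ⟨u, hu⟩ := spectrum.notMem_iff.mp ht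
  set S : H →L[ℂ] H := ↑u⁻¹
  obtain ⟨ε, hε, hSε⟩ : ∃ ε > 0, ‖S‖ * (3 * ε) < 1 := by
    refine ⟨(3 * (‖S‖ + 1))⁻¹, by positivity, ?_⟩
    field_simp
    linarith
  refine ⟨ε, hε, ?_⟩
  set P := E (Set.Icc (t - ε) (t + ε))
  have hP : IsStarProjection P := hE.isStarProjection measurableSet_Icc
  have hTP : ‖(T - algebraMap ℝ _ (t - ε)) * P‖ ≤ 2 * ε :=
    calc _ ≤ (t + ε) - (t - ε) :=
          hE.norm_sub_algebraMap_mul_le hT measurableSet_Icc (by linarith) subset_rfl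
      _ = 2 * ε := by ring
  have hPS : P = S * (ε • P - (T - algebraMap ℝ _ (t - ε)) * P) := by
    have huP : ↑u * P = ε • P - (T - algebraMap ℝ _ (t - ε)) * P := by
      rw [hu, map_sub, Algebra.smul_def]
      noncomm_ring
    rw [← huP, Units.inv_mul_cancel_left]
  refine eq_zero_of_isIdempotentElem_of_norm_lt_one hP.isIdempotentElem ?_
  calc ‖P‖ = ‖S * (ε • P - (T - algebraMap ℝ _ (t - ε)) * P)‖ := by rw [← hPS]
    _ ≤ ‖S‖ * (ε * 1 + 2 * ε) := by
        refine (norm_mul_le _ _).trans ?_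
        gcongr
        refine (norm_sub_le _ _).trans (add_le_add ?_ hTP)
        rw [norm_smul, Real.norm_of_nonneg hε.le]
        gcongr
        exact hP.norm_le
    _ < 1 := by linarith

lemma map_compl_spectrum (hE : IsSpectralMeasure T E) (hT : IsSelfAdjoint T) :
    E (spectrum ℝ T)ᶜ = 0 := by
  have hmeas : MeasurableSet (spectrum ℝ T)ᶜ := (spectrum.isClosed T).measurableSet.compl
  ext x
  refine (hE.scalarMeasure_apply_eq_zero_iff hmeas).mp
    (MeasureTheory.measure_null_of_locally_null _ fun t ht ↦ ?_)
  obtain ⟨ε, hε, hEε⟩ := hE.exists_map_Icc_eq_zero hT ht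
  refine ⟨_, mem_nhdsWithin_of_mem_nhds
    (Icc_mem_nhds (sub_lt_self t hε) (lt_add_of_pos_right t hε)), ?_⟩
  rw [hE.scalarMeasure_apply_eq_zero_iff measurableSet_Icc, hEε, zero_apply]

lemma map_inter_spectrum (hE : IsSpectralMeasure T E) (hT : IsSelfAdjoint T)
    (hΔ : MeasurableSet Δ) : E (Δ ∩ spectrum ℝ T) = E Δ := by
  have hspec : MeasurableSet (spectrum ℝ T) := (spectrum.isClosed T).measurableSet
  have hone : E (spectrum ℝ T) = 1 := by
    rw [← sub_eq_zero, ← neg_sub, ← hE.map_compl hspec, hE.map_compl_spectrum hT, neg_zero]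
  rw [← hE.map_inter _ _ hΔ hspec, hone, mul_one]

lemma algebraMap_le_two_mul_sub_one_mul (hE : IsSpectralMeasure T E) (hT : IsSelfAdjoint T)
    (hΔ : MeasurableSet Δ) {l δ : ℝ} (hlow : Δ ⊆ Set.Iic (l - δ))
    (hhigh : Δᶜ ∩ spectrum ℝ T ⊆ Set.Ici (l + δ)) :
    algebraMap ℝ _ δ ≤ (2 * E Δ - 1) * (algebraMap ℝ _ l - T) := by
  have hlow_nonneg : 0 ≤ (algebraMap ℝ _ (l - δ) - T) * E Δ :=
    hE.algebraMap_sub_mul_nonneg hT hΔ hlow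
  have hhigh_nonneg : 0 ≤ (T - algebraMap ℝ _ (l + δ)) * (1 - E Δ) := by
    rw [← hE.map_compl hΔ, ← hE.map_inter_spectrum hT hΔ.compl]
    exact hE.sub_algebraMap_mul_nonneg hT
      (hΔ.compl.inter (spectrum.isClosed T).measurableSet) hhigh
  rw [← sub_nonneg]
  calc 0 ≤ (algebraMap ℝ _ (l - δ) - T) * E Δ + (T - algebraMap ℝ _ (l + δ)) * (1 - E Δ) :=
        add_nonneg hlow_nonneg hhigh_nonneg
    _ = (algebraMap ℝ _ l - T) * (2 * E Δ - 1) - algebraMap ℝ _ δ := by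
        simp only [map_sub, map_add]
        noncomm_ring
    _ = (2 * E Δ - 1) * (algebraMap ℝ _ l - T) - algebraMap ℝ _ δ := by
        rw [(hE.commute_algebraMap_sub_two_mul_sub_one hΔ l).eq]

variable {V : H →L[ℂ] H} {a b l δ : ℝ}

lemma mul_norm_sq_le_re_inner_two_mul_sub_one_mul (hE : IsSpectralMeasure T E)
    (hT : IsSelfAdjoint T) (hV : IsSelfAdjoint V) (hΔ : MeasurableSet Δ)
    (h₁ : E Δ * V * E Δ = 0) (h₂ : (1 - E Δ) * V * (1 - E Δ) = 0) (hlow : Δ ⊆ Set.Iic (l - δ))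
    (hhigh : Δᶜ ∩ spectrum ℝ T ⊆ Set.Ici (l + δ)) (x : H) :
    δ * ‖x‖ ^ 2 ≤ (⟪x, ((2 * E Δ - 1) * (algebraMap ℝ _ l - (T + V))) x⟫_ℂ).re := by
  rw [← sub_sub, mul_sub (2 * E Δ - 1) _ V, sub_eq_add_neg]
  exact mul_norm_sq_le_re_inner_add (hE.algebraMap_le_two_mul_sub_one_mul hT hΔ hlow hhigh)
    (neg_mem (two_mul_sub_one_mul_mem_skewAdjoint (hE.isSelfAdjoint Δ hΔ) hV h₁ h₂)) x

lemma abs_im_inner_two_mul_sub_one_mul_le (hE : IsSpectralMeasure T E) (hT : IsSelfAdjoint T)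
    (hΔ : MeasurableSet Δ) (V : H →L[ℂ] H) (l : ℝ) (x : H) :
    |(⟪x, ((2 * E Δ - 1) * (algebraMap ℝ _ l - (T + V))) x⟫_ℂ).im| ≤ ‖V‖ * ‖x‖ ^ 2 := by
  have hJ : 2 * E Δ - 1 ∈ unitary (H →L[ℂ] H) :=
    (hE.isStarProjection hΔ).two_mul_sub_one_mem_unitary
  have hJ_sa : IsSelfAdjoint (2 * E Δ - 1) := by
    simp [IsSelfAdjoint, two_mul, (hE.isSelfAdjoint Δ hΔ).star_eq]
  have hsa : IsSelfAdjoint ((2 * E Δ - 1) * (algebraMap ℝ _ l - T)) :=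
    (hJ_sa.commute_iff (.sub (.algebraMap _ (.all l)) hT)).mp
      (hE.commute_algebraMap_sub_two_mul_sub_one hΔ l).symm
  rw [← sub_sub, mul_sub (2 * E Δ - 1) _ V, sub_eq_add_neg, ← CStarRing.norm_mem_unitary_mul V hJ,
    ← norm_neg]
  exact abs_im_inner_add_le hsa x

lemma notMem_spectrum_add (hE : IsSpectralMeasure T E) (hT : IsSelfAdjoint T)
    (hV : IsSelfAdjoint V) (hΔ : MeasurableSet Δ) (h₁ : E Δ * V * E Δ = 0)
    (h₂ : (1 - E Δ) * V * (1 - E Δ) = 0) (hlow : Δ ⊆ Set.Iic a)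
    (hhigh : Δᶜ ∩ spectrum ℝ T ⊆ Set.Ici b) (hal : a < l) (hlb : l < b) :
    l ∉ spectrum ℝ (T + V) := by
  set γ := min (l - a) (b - l)
  have hγ : 0 < γ := lt_min (sub_pos.mpr hal) (sub_pos.mpr hlb)
  have haγ : a ≤ l - γ := by linarith [min_le_left (l - a) (b - l)]
  have hγb : l + γ ≤ b := by linarith [min_le_right (l - a) (b - l)]
  have hJ : 2 * E Δ - 1 ∈ unitary (H →L[ℂ] H) :=
    (hE.isStarProjection hΔ).two_mul_sub_one_mem_unitary
  rw [spectrum.notMem_iff, ← (Unitary.isUnit_coe (U := ⟨_, hJ⟩)).mul_left_iff]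
  exact isUnit_of_forall_le_re_inner hγ
    (hE.mul_norm_sq_le_re_inner_two_mul_sub_one_mul hT hV hΔ h₁ h₂
      (hlow.trans (Set.Iic_subset_Iic.mpr haγ)) (hhigh.trans (Set.Ici_subset_Ici.mpr hγb)))

lemma norm_sub_map_Iic_le {F : Set ℝ → H →L[ℂ] H} (hE : IsSpectralMeasure T E)
    (hF : IsSpectralMeasure (T + V) F) (hT : IsSelfAdjoint T) (hV : IsSelfAdjoint V)
    (hΔ : MeasurableSet Δ) (h₁ : E Δ * V * E Δ = 0) (h₂ : (1 - E Δ) * V * (1 - E Δ) = 0)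
    (hab : a < b) (hlow : Δ ⊆ Set.Iic a) (hhigh : Δᶜ ∩ spectrum ℝ T ⊆ Set.Ici b) :
    ‖E Δ - F (Set.Iic a)‖ ≤ Real.sin (Real.arctan (2 * ‖V‖ / (b - a)) / 2) := by
  obtain ⟨m, δ, rfl, rfl⟩ : ∃ m δ, a = m - δ ∧ b = m + δ :=
    ⟨(a + b) / 2, (b - a) / 2, by ring, by ring⟩
  have hδ : 0 < δ := by linarith
  have hgap : (Set.Iic (m - δ))ᶜ ∩ spectrum ℝ (T + V) ⊆ Set.Ici m := by
    rintro l ⟨hl, hspec⟩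
    exact le_of_not_gt fun hlm ↦ hE.notMem_spectrum_add hT hV hΔ h₁ h₂ hlow hhigh
      (not_le.mp hl) (hlm.trans (lt_add_of_pos_right m hδ)) hspec
  have hnonneg : 0 ≤ (2 * F (Set.Iic (m - δ)) - 1) * (algebraMap ℝ _ m - (T + V)) := by
    simpa using hF.algebraMap_le_two_mul_sub_one_mul (δ := 0) (hT.add hV) measurableSet_Iic
      (Set.Iic_subset_Iic.mpr (by linarith)) (by simpa using hgap)
  have harg : 2 * ‖V‖ / (m + δ - (m - δ)) = ‖V‖ / δ := by
    rw [add_sub_sub_cancel, ← two_mul, mul_div_mul_left _ _ two_ne_zero]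
  rw [harg]
  exact norm_sub_le_sin_arctan_div_two (hE.isStarProjection hΔ)
    (hF.isStarProjection measurableSet_Iic) hnonneg hδ (norm_nonneg V)
    (hE.mul_norm_sq_le_re_inner_two_mul_sub_one_mul hT hV hΔ h₁ h₂ hlow hhigh)
    (hE.abs_im_inner_two_mul_sub_one_mul_le hT hΔ V m)

end IsSpectralMeasure

end SpectralMeasure

lemma sin_arctan_div_two_lt (x : ℝ) : Real.sin (Real.arctan x / 2) < √2 / 2 := by
  rw [← Real.sin_pi_div_four]
  exact Real.sin_lt_sin_of_lt_of_le_pi_div_two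
    (by linarith [Real.neg_pi_div_two_lt_arctan x, Real.pi_pos]) (by linarith [Real.pi_pos])
    (by linarith [Real.arctan_lt_pi_div_two x])

lemma sInf_image2_dist_eq {s t : Set ℝ} (hs : IsClosed s) (ht : IsClosed t) (hs₀ : s.Nonempty)
    (ht₀ : t.Nonempty) (hs_bdd : BddAbove s) (ht_bdd : BddBelow t) (hst : sSup s ≤ sInf t) :
    sInf (Set.image2 dist s t) = sInf t - sSup s := by
  have hmem : sInf t - sSup s ∈ Set.image2 dist s t :=
    ⟨sSup s, hs.csSup_mem hs₀ hs_bdd, sInf t, ht.csInf_mem ht₀ ht_bdd, by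
      rw [dist_comm, Real.dist_eq, abs_of_nonneg (sub_nonneg.mpr hst)]⟩
  refine IsLeast.csInf_eq ⟨hmem, ?_⟩
  rintro _ ⟨x, hx, y, hy, rfl⟩
  calc sInf t - sSup s ≤ y - x := sub_le_sub (csInf_le ht_bdd hy) (le_csSup hs_bdd hx)
    _ ≤ dist x y := by rw [dist_comm]; exact le_abs_self _

theorem norm_diff_projections_subordinated_case_general
    {H : Type*} [NormedAddCommGroup H] [InnerProductSpace ℂ H] [CompleteSpace H]
    (A V B : H →L[ℂ] H) (hA : IsSelfAdjoint A) (hV : IsSelfAdjoint V) (hB : B = A + V)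
    (σ Sig : Set ℝ) (hσc : IsClosed σ) (hSigc : IsClosed Sig) (hdisj : Disjoint σ Sig)
    (hspec : spectrum ℝ A = σ ∪ Sig)
    (d : ℝ) (hd : d = sInf (Set.image2 dist σ Sig)) (hd0 : 0 < d)
    (EA EB : Set ℝ → H →L[ℂ] H) (hEA : IsSpectralMeasure A EA) (hEB : IsSpectralMeasure B EB)
    (hoff₁ : EA σ * V * EA σ = 0) (hoff₂ : EA Sig * V * EA Sig = 0)
    (hsub : sSup σ < sInf Sig) :
    ‖EA σ - EB (Set.Iic (sSup σ))‖ ≤ Real.sin (Real.arctan (2 * ‖V‖ / d) / 2) ∧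
    Real.sin (Real.arctan (2 * ‖V‖ / d) / 2) < √2 / 2 := by
  subst hB
  refine ⟨?_, sin_arctan_div_two_lt _⟩
  obtain ⟨hσ₀, hSig₀⟩ : σ.Nonempty ∧ Sig.Nonempty := by
    rw [← Set.image2_nonempty_iff (f := dist), Set.nonempty_iff_ne_empty]
    intro hempty
    simp [hd, hempty] at hd0
  have hbdd : Bornology.IsBounded (σ ∪ Sig) := hspec ▸ spectrum.isBounded A
  have hσ_bdd : BddAbove σ := (hbdd.subset Set.subset_union_left).bddAbove
  have hSig_bdd : BddBelow Sig := (hbdd.subset Set.subset_union_right).bddBelow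
  have hcompl : σᶜ ∩ spectrum ℝ A = Sig := by
    rw [hspec, Set.inter_union_distrib_left, Set.compl_inter_self, Set.empty_union,
      Set.inter_eq_right.mpr hdisj.subset_compl_left]
  have hEA_Sig : EA Sig = 1 - EA σ := by
    rw [← hcompl, hEA.map_inter_spectrum hA hσc.measurableSet.compl,
      hEA.map_compl hσc.measurableSet]
  rw [hd, sInf_image2_dist_eq hσc hSigc hσ₀ hSig₀ hσ_bdd hSig_bdd hsub.le]
  exact hEA.norm_sub_map_Iic_le hEB hA hV hσc.measurableSet hoff₁ (hEA_Sig ▸ hoff₂) hsub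
    (fun _ ↦ le_csSup hσ_bdd) (hcompl.trans_subset fun _ ↦ csInf_le hSig_bdd)

/-- **Theorem C (ii).** If the isolated parts `σ` and `Σ` of the spectrum of `A` are
subordinated, `sup σ < inf Σ`, and the perturbation `V` is off-diagonal, then
`‖E_A(σ) − E_B((−∞, sup σ])‖ ≤ sin((1/2) arctan (2‖V‖/d)) < √2/2`. -/
theorem norm_diff_projections_subordinated_case
    {H : Type*} [NormedAddCommGroup H] [InnerProductSpace ℂ H] [CompleteSpace H]
    [TopologicalSpace.SeparableSpace H]
    (A V B : H →L[ℂ] H) (hA : IsSelfAdjoint A) (hV : IsSelfAdjoint V) (hB : B = A + V)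
    (σ Sig : Set ℝ) (hσc : IsClosed σ) (hSigc : IsClosed Sig) (hdisj : Disjoint σ Sig)
    (hspec : spectrum ℝ A = σ ∪ Sig)
    (d : ℝ) (hd : d = sInf (Set.image2 dist σ Sig)) (hd0 : 0 < d)
    (EA EB : Set ℝ → H →L[ℂ] H) (hEA : IsSpectralMeasure A EA) (hEB : IsSpectralMeasure B EB)
    (hoff₁ : EA σ * V * EA σ = 0) (hoff₂ : EA Sig * V * EA Sig = 0)
    (hsub : sSup σ < sInf Sig) :
    ‖EA σ - EB (Set.Iic (sSup σ))‖ ≤ Real.sin (Real.arctan (2 * ‖V‖ / d) / 2) ∧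
    Real.sin (Real.arctan (2 * ‖V‖ / d) / 2) < Real.sqrt 2 / 2 :=
  norm_diff_projections_subordinated_case_general A V B hA hV hB σ Sig hσc hSigc hdisj hspec d
    hd hd0 EA EB hEA hEB hoff₁ hoff₂ hsub
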